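/- arXiv:2303.13304 — 2 statements merged into one kernel-verified Lean document; each statement's English description precedes it below -/
import Mathlib

section
/- For every generalized Pauli matrix X^s Z^t on ℂ^d there exists a unitary matrix W and a complex number c with |c| = 1 such that W (X^s Z^t) W† = c · Z^{gcd(s, t, d)}. -/
open Matrix

/-- The primitive `d`-th root of unity `ω = e^{2πi/d}`. -/
noncomputable def omega (d : ℕ) : ℂ := Complex.exp (2 * Real.pi * Complex.I / d)

/-- The power `X^s` (for any integer `s`) of the shift matrix `X` on `ℂ^d`,
`X|j⟩ = |j+1 mod d⟩`; its `(i,j)` entry is `1` iff `i ≡ j + s (mod d)`. -/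
def Xpow (d : ℕ) (s : ℤ) : Matrix (Fin d) (Fin d) ℂ :=
  Matrix.of fun i j => if (i : ℤ) = (((j : ℕ) : ℤ) + s) % (d : ℤ) then (1 : ℂ) else 0

/-- The power `Z^t` (for any integer `t`) of the clock matrix `Z` on `ℂ^d`,
`Z|j⟩ = ω^j |j⟩`; it is diagonal with entries `ω^{t·j} = e^{2πi·t·j/d}`. -/
noncomputable def Zpow (d : ℕ) (t : ℤ) : Matrix (Fin d) (Fin d) ℂ :=
  Matrix.diagonal fun j => Complex.exp (2 * Real.pi * Complex.I * (t : ℂ) * ((j : ℕ) : ℂ) / (d : ℂ))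

/-- The generalized Pauli matrix `X^s Z^t` on `ℂ^d`. -/
noncomputable def GPM (d : ℕ) (s t : ℤ) : Matrix (Fin d) (Fin d) ℂ :=
  Xpow d s * Zpow d t

/-- `A ≈ B` : equality up to a unimodular (global phase) scalar. -/
def PhaseEq {n : Type*} (A B : Matrix n n ℂ) : Prop :=
  ∃ c : ℂ, ‖c‖ = 1 ∧ A = c • B

/-! Up to unitary conjugation and phase, the exponent vector `(s, t)` of `X^s Z^t` may be replaced
by any vector in its `SL(2, ℤ)`-orbit: the Fourier transform realizes the generator `S`, and a
diagonal matrix of quadratic phases realizes the generator `T`. The orbit of `(s, t)` contains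
`(0, gcd(s, t))`, and since `X^d = 1` this may be read as `(d, gcd(s, t))`, whose orbit contains
`(0, gcd(s, t, d))`. -/

/-- `A` is unitarily conjugate to `B` up to a global phase. -/
def UnitaryConjPhase {n : Type*} [Fintype n] [DecidableEq n] (A B : Matrix n n ℂ) : Prop :=
  ∃ W ∈ Matrix.unitaryGroup n ℂ, PhaseEq (W * A * Wᴴ) B

namespace UnitaryConjPhase

variable {m n : Type*} [Fintype m] [DecidableEq m] [Fintype n] [DecidableEq n]
  {A B C : Matrix n n ℂ}

theorem of_intertwine {W : Matrix n n ℂ} (hW : W ∈ Matrix.unitaryGroup n ℂ) {c : ℂ}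
    (hc : ‖c‖ = 1) (h : W * A = c • (B * W)) : UnitaryConjPhase A B := by
  refine ⟨W, hW, c, hc, ?_⟩
  have hWW : W * Wᴴ = 1 := Matrix.mem_unitaryGroup_iff.1 hW
  rw [h, Matrix.smul_mul, Matrix.mul_assoc, hWW, Matrix.mul_one]

theorem refl (A : Matrix n n ℂ) : UnitaryConjPhase A A :=
  of_intertwine (one_mem _) norm_one (by simp)

theorem symm (h : UnitaryConjPhase A B) : UnitaryConjPhase B A := by
  obtain ⟨W, hW, c, hc, hWc⟩ := h
  have hc₀ : c ≠ 0 := norm_ne_zero_iff.1 (by simp [hc])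
  have hWW : Wᴴ * W = 1 := Matrix.mem_unitaryGroup_iff'.1 hW
  refine of_intertwine (Unitary.star_mem hW) (c := c⁻¹) (by simp [hc]) ?_
  calc Wᴴ * B = c⁻¹ • (Wᴴ * (W * A * Wᴴ)) := by
        rw [hWc, Matrix.mul_smul, inv_smul_smul₀ hc₀]
    _ = c⁻¹ • (A * Wᴴ) := by
        simp only [← Matrix.mul_assoc, hWW, Matrix.one_mul]

theorem trans (hAB : UnitaryConjPhase A B) (hBC : UnitaryConjPhase B C) :
    UnitaryConjPhase A C := by
  obtain ⟨V, hV, b, hb, hVb⟩ := hAB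
  obtain ⟨W, hW, c, hc, hWc⟩ := hBC
  refine ⟨W * V, mul_mem hW hV, b * c, by simp [hb, hc], ?_⟩
  calc W * V * A * (W * V)ᴴ = W * (V * A * Vᴴ) * Wᴴ := by
        simp only [Matrix.conjTranspose_mul, Matrix.mul_assoc]
    _ = (b * c) • C := by
        rw [hVb, Matrix.mul_smul, Matrix.smul_mul, hWc, smul_smul]

theorem submatrix (h : UnitaryConjPhase A B) (e : m ≃ n) :
    UnitaryConjPhase (A.submatrix e e) (B.submatrix e e) := by
  obtain ⟨W, hW, c, hc, hWc⟩ := h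
  refine ⟨W.submatrix e e, ?_, c, hc, ?_⟩
  · rw [Matrix.mem_unitaryGroup_iff, Matrix.star_eq_conjTranspose, Matrix.conjTranspose_submatrix,
      Matrix.submatrix_mul_equiv, ← Matrix.star_eq_conjTranspose, Matrix.mem_unitaryGroup_iff.1 hW,
      Matrix.submatrix_one_equiv]
  · rw [Matrix.conjTranspose_submatrix, Matrix.submatrix_mul_equiv, Matrix.submatrix_mul_equiv, hWc]
    rfl

end UnitaryConjPhase

theorem diagonal_circle_mem_unitaryGroup {n : Type*} [Fintype n] [DecidableEq n] (q : n → Circle) :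
    Matrix.diagonal (fun x => (q x : ℂ)) ∈ Matrix.unitaryGroup n ℂ := by
  rw [Matrix.mem_unitaryGroup_iff, Matrix.star_eq_conjTranspose, Matrix.diagonal_conjTranspose,
    Matrix.diagonal_mul_diagonal, ← Matrix.diagonal_one]
  congr 1
  funext x
  simp [Complex.mul_conj]

section Weyl

variable {R : Type*} [CommRing R] [Fintype R] [DecidableEq R]

/-- The Weyl matrix `X^s Z^t` over a ring `R`, where `X|k⟩ = |k + 1⟩` and
`Z|k⟩ = χ(k)|k⟩` for an additive character `χ`. For `R = ZMod d` and the standard character these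
are the generalized Pauli matrices, with exponents reduced modulo `d`. -/
def weylMatrix (χ : AddChar R ℂ) (s t : R) : Matrix R R ℂ :=
  Matrix.of fun i k => if i = k + s then χ (t * k) else 0

/-- The discrete Fourier transform attached to an additive character of a finite ring. -/
noncomputable def fourierMatrix (χ : AddChar R ℂ) : Matrix R R ℂ :=
  Matrix.of fun i j => ((√(Fintype.card R) : ℝ) : ℂ)⁻¹ * χ (i * j)

/-- `q` is a unimodular quadratic function on `R` whose polarization is the bicharacter
`(x, y) ↦ χ (x * y)`. Conjugation by the diagonal matrix of `q` implements the shear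
`(s, t) ↦ (s, t + s)` of Weyl matrices. -/
def IsQuadraticRefinement (χ : AddChar R ℂ) (q : R → Circle) : Prop :=
  ∀ x y, (q (x + y) : ℂ) = q x * q y * χ (x * y)

variable (χ : AddChar R ℂ)

theorem mul_weylMatrix_apply (M : Matrix R R ℂ) (s t i k : R) :
    (M * weylMatrix χ s t) i k = M i (k + s) * χ (t * k) := by
  simp [Matrix.mul_apply, weylMatrix]

theorem weylMatrix_mul_apply (M : Matrix R R ℂ) (s t i k : R) :
    (weylMatrix χ s t * M) i k = χ (t * (i - s)) * M (i - s) k := by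
  simp [Matrix.mul_apply, weylMatrix, ← sub_eq_iff_eq_add]

variable {χ}

theorem fourierMatrix_mem_unitaryGroup (hχ : χ.IsPrimitive) :
    fourierMatrix χ ∈ Matrix.unitaryGroup R ℂ := by
  rw [Matrix.mem_unitaryGroup_iff]
  ext i k
  have hsq : ((√(Fintype.card R) : ℝ) : ℂ)⁻¹ * ((√(Fintype.card R) : ℝ) : ℂ)⁻¹ =
      (Fintype.card R : ℂ)⁻¹ := by
    rw [← mul_inv, ← Complex.ofReal_mul, Real.mul_self_sqrt (Nat.cast_nonneg _),
      Complex.ofReal_natCast]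
  have hterm (j : R) : fourierMatrix χ i j * star (fourierMatrix χ) j k =
      (Fintype.card R : ℂ)⁻¹ * χ (j * (i - k)) := by
    rw [Matrix.star_apply, fourierMatrix, Matrix.of_apply, Matrix.of_apply, star_mul', star_inv₀,
      Complex.star_def, ← AddChar.map_neg_eq_conj, Complex.conj_ofReal, mul_mul_mul_comm, hsq,
      ← AddChar.map_add_eq_mul]
    ring_nf
  rw [Matrix.mul_apply, Finset.sum_congr rfl fun j _ => hterm j, ← Finset.mul_sum,
    AddChar.sum_mulShift _ hχ, Matrix.one_apply]
  simp [sub_eq_zero]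

theorem unitaryConjPhase_weylMatrix_rotate (hχ : χ.IsPrimitive) (s t : R) :
    UnitaryConjPhase (weylMatrix χ s t) (weylMatrix χ (-t) s) := by
  refine .of_intertwine (fourierMatrix_mem_unitaryGroup hχ) (χ.norm_apply (-(s * t))) ?_
  ext i k
  have hphase : χ (i * (k + s)) * χ (t * k) =
      χ (-(s * t)) * (χ (s * (i - -t)) * χ ((i - -t) * k)) := by
    simp only [← AddChar.map_add_eq_mul]
    ring_nf
  rw [Matrix.smul_apply, mul_weylMatrix_apply, weylMatrix_mul_apply, fourierMatrix,
    Matrix.of_apply, Matrix.of_apply, smul_eq_mul, mul_assoc, hphase]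
  ring

theorem unitaryConjPhase_weylMatrix_shear {q : R → Circle}
    (hq : IsQuadraticRefinement χ q) (s t : R) :
    UnitaryConjPhase (weylMatrix χ s t) (weylMatrix χ s (t + s)) := by
  refine .of_intertwine (diagonal_circle_mem_unitaryGroup q) (Circle.norm_coe (q s)) ?_
  ext i k
  rw [Matrix.diagonal_mul, Matrix.smul_apply, Matrix.mul_diagonal, smul_eq_mul, weylMatrix,
    weylMatrix, Matrix.of_apply, Matrix.of_apply]
  split_ifs with h
  · rw [h, hq, add_mul, AddChar.map_add_eq_mul, mul_comm k s]
    ring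
  · simp

open scoped MatrixGroups in
theorem unitaryConjPhase_weylMatrix_vecMul_SL2 (hχ : χ.IsPrimitive) {q : R → Circle}
    (hq : IsQuadraticRefinement χ q) (g : SL(2, ℤ)) (v : Fin 2 → R) :
    UnitaryConjPhase (weylMatrix χ (v 0) (v 1))
      (weylMatrix χ ((v ᵥ* (Int.castRingHom R).mapMatrix g) 0)
        ((v ᵥ* (Int.castRingHom R).mapMatrix g) 1)) := by
  have hg : g ∈ Subgroup.closure {ModularGroup.S, ModularGroup.T} := by
    simp [SpecialLinearGroup.SL2Z_generators]
  induction hg using Subgroup.closure_induction generalizing v with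
  | one => simpa using UnitaryConjPhase.refl (weylMatrix χ (v 0) (v 1))
  | mem g hg =>
    rcases hg with rfl | rfl
    · simpa [Matrix.vecMul_eq_sum, ModularGroup.coe_S] using
        (unitaryConjPhase_weylMatrix_rotate hχ (v 1) (-v 0)).symm
    · simpa [Matrix.vecMul_eq_sum, ModularGroup.coe_T, add_comm] using
        unitaryConjPhase_weylMatrix_shear hq (v 0) (v 1)
  | mul g h _ _ ihg ihh =>
    have hgh := (ihg v).trans (ihh _)
    rwa [Matrix.vecMul_vecMul, ← map_mul, ← Matrix.SpecialLinearGroup.coe_mul] at hgh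
  | inv g _ ih =>
    have hg := ih (v ᵥ* (Int.castRingHom R).mapMatrix (g⁻¹ : SL(2, ℤ)))
    rw [Matrix.vecMul_vecMul, ← map_mul, ← Matrix.SpecialLinearGroup.coe_mul, inv_mul_cancel,
      Matrix.SpecialLinearGroup.coe_one, map_one, Matrix.vecMul_one] at hg
    exact hg.symm

theorem unitaryConjPhase_weylMatrix_gcd (hχ : χ.IsPrimitive) {q : R → Circle}
    (hq : IsQuadraticRefinement χ q) (s t : ℤ) :
    UnitaryConjPhase (weylMatrix χ s t) (weylMatrix χ 0 (Int.gcd s t)) := by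
  obtain ⟨a, b, ha, hb, hab⟩ := extract_gcd s t
  rw [gcd_isUnit_iff] at hab
  rw [← Int.coe_gcd] at ha hb
  obtain ⟨g, rfl, rfl⟩ := hab.exists_SL2_row 1
  have h := unitaryConjPhase_weylMatrix_vecMul_SL2 hχ hq g ![0, (Int.gcd s t : R)]
  have hs : (s : R) = Int.gcd s t * (g 1 0 : ℤ) := mod_cast congrArg (Int.cast : ℤ → R) ha
  have ht : (t : R) = Int.gcd s t * (g 1 1 : ℤ) := mod_cast congrArg (Int.cast : ℤ → R) hb
  simpa [Matrix.vecMul_eq_sum, ← hs, ← ht] using h.symm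

end Weyl

theorem GPM_self_left (d : ℕ) (t : ℤ) : GPM d d t = GPM d 0 t := by
  simp [GPM, Xpow]

section ZMod

variable (d : ℕ) [NeZero d]

/-- The quadratic phase `x ↦ e^{πi x(x+d)/d}` on `ZMod d`. The summand `d` makes it well defined
modulo `d` for odd `d` as well. -/
noncomputable def quadraticPhase (x : ZMod d) : Circle :=
  ZMod.toCircle ((x.val * (x.val + d) : ℕ) : ZMod (2 * d))

variable {d}

theorem toCircle_mul_natCast (m : ℕ) [NeZero m] (a : ℕ) :
    ZMod.toCircle ((m * a : ℕ) : ZMod (m * d)) = ZMod.toCircle (a : ZMod d) := by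
  ext
  rw [ZMod.toCircle_natCast, ZMod.toCircle_natCast]
  push_cast
  rw [mul_left_comm, mul_div_mul_left _ _ (NeZero.ne (m : ℂ))]

theorem quadraticPhase_natCast (a : ℕ) :
    quadraticPhase d a = ZMod.toCircle ((a * (a + d) : ℕ) : ZMod (2 * d)) := by
  have hper : Function.Periodic
      (fun a : ℕ => ZMod.toCircle ((a * (a + d) : ℕ) : ZMod (2 * d))) d := fun a => by
    have h : (a + d) * (a + d + d) = a * (a + d) + (2 * d) * (a + d) := by ring
    simp only [h, Nat.cast_add, Nat.cast_mul (2 * d), ZMod.natCast_self, zero_mul, add_zero]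
  rw [quadraticPhase, ZMod.val_natCast]
  exact hper.map_mod_nat a

theorem isQuadraticRefinement_quadraticPhase :
    IsQuadraticRefinement ZMod.stdAddChar (quadraticPhase d) := fun x y => by
  have h : (x.val + y.val) * (x.val + y.val + d) =
      x.val * (x.val + d) + y.val * (y.val + d) + 2 * (x.val * y.val) := by ring
  rw [ZMod.stdAddChar_apply, ← Circle.coe_mul, ← Circle.coe_mul, Circle.coe_inj]
  nth_rw 1 [← ZMod.natCast_zmod_val x, ← ZMod.natCast_zmod_val y]
  rw [← Nat.cast_add, quadraticPhase_natCast, h, Nat.cast_add _ (2 * _), Nat.cast_add,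
    AddChar.map_add_eq_mul, AddChar.map_add_eq_mul, toCircle_mul_natCast,
    Nat.cast_mul x.val y.val, ZMod.natCast_zmod_val, ZMod.natCast_zmod_val, quadraticPhase,
    quadraticPhase]

theorem finEquiv_apply_eq_natCast (j : Fin d) : ZMod.finEquiv d j = ((j : ℕ) : ZMod d) := by
  obtain _ | n := d
  · exact j.elim0
  · exact (Fin.cast_val_eq_self j).symm

theorem Xpow_eq_submatrix_weylMatrix (s : ℤ) :
    Xpow d s = (weylMatrix ZMod.stdAddChar (s : ZMod d) 0).submatrix
      (ZMod.finEquiv d) (ZMod.finEquiv d) := by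
  ext i j
  have hiff : (i : ℤ) = ((j : ℕ) + s) % d ↔ ZMod.finEquiv d i = ZMod.finEquiv d j + s := by
    rw [finEquiv_apply_eq_natCast, finEquiv_apply_eq_natCast]
    have h := ZMod.intCast_eq_intCast_iff' (i : ℕ) ((j : ℕ) + s) d
    rw [Int.emod_eq_of_lt (by omega) (by omega)] at h
    exact_mod_cast h.symm
  simp [Xpow, weylMatrix, hiff]

theorem GPM_eq_submatrix_weylMatrix (s t : ℤ) :
    GPM d s t = (weylMatrix ZMod.stdAddChar (s : ZMod d) (t : ZMod d)).submatrix
      (ZMod.finEquiv d) (ZMod.finEquiv d) := by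
  ext i j
  have hexp : Complex.exp (2 * Real.pi * Complex.I * t * (j : ℕ) / d) =
      ZMod.stdAddChar ((t : ZMod d) * ZMod.finEquiv d j) := by
    rw [finEquiv_apply_eq_natCast]
    have h := ZMod.stdAddChar_coe (N := d) (t * (j : ℕ))
    push_cast at h
    rw [h, mul_assoc _ (t : ℂ)]
  rw [GPM, Zpow, Matrix.mul_diagonal, Xpow_eq_submatrix_weylMatrix, hexp]
  simp [weylMatrix]

theorem unitaryConjPhase_GPM_gcd (s t : ℤ) :
    UnitaryConjPhase (GPM d s t) (GPM d 0 (Int.gcd s t)) := by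
  simp only [GPM_eq_submatrix_weylMatrix, Int.cast_zero, Int.cast_natCast]
  exact (unitaryConjPhase_weylMatrix_gcd (ZMod.isPrimitive_stdAddChar d)
    isQuadraticRefinement_quadraticPhase s t).submatrix (ZMod.finEquiv d).toEquiv

theorem Xpow_zero : Xpow d 0 = 1 := by
  ext i j
  simp [Xpow_eq_submatrix_weylMatrix, weylMatrix, Matrix.one_apply]

theorem GPM_zero_left (t : ℤ) : GPM d 0 t = Zpow d t := by
  rw [GPM, Xpow_zero, Matrix.one_mul]

end ZMod

/-- Every GPM `X^s Z^t` on `ℂ^d` is unitarily conjugate, up to a global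
phase, to `Z^{gcd(s,t,d)}`. -/
theorem gpm_conj_to_Z_gcd (d : ℕ) (hd : 2 ≤ d) (s t : ℤ) :
    ∃ W ∈ Matrix.unitaryGroup (Fin d) ℂ, ∃ c : ℂ, ‖c‖ = 1 ∧
      W * GPM d s t * Wᴴ = c • Zpow d (Int.gcd s (Int.gcd t (d : ℤ) : ℤ) : ℤ) := by
  have : NeZero d := ⟨by omega⟩
  have hst : UnitaryConjPhase (GPM d s t) (GPM d d (Int.gcd s t)) := by
    rw [GPM_self_left]
    exact unitaryConjPhase_GPM_gcd s t
  have hgcd := hst.trans (unitaryConjPhase_GPM_gcd d (Int.gcd s t))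
  rwa [GPM_zero_left, Int.gcd_comm, Int.gcd_assoc] at hgcd
end

section
/- Let a and b be positive divisors of d with a < d and b < d, and let u₁, v₁, u₂, v₂ be integers with 0 ≤ u₁, v₁ < d/a and 0 ≤ u₂, v₂ < d/b. There exists a unitary matrix W on ℂ^d with W X^a W† ≈ X^{u₁ a} Z^{v₁ a} and W Z^b W† ≈ X^{u₂ b} Z^{v₂ b} if and only if all three of the following hold: (1) gcd(u₁, v₁, d/a) = 1 = gcd(u₂, v₂, d/b); (2) (u₁v₂ − u₂v₁)·a·b ≡ a·b (mod d); and (3) gcd(u₁v₂ − u₂v₁, d/a, d/b) = 1. -/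
open Matrix

/-!
`W` preserves the commutation phase of the two operators and is injective on exponents: if
`x • (u₁a, v₁a) + y • (u₂b, v₂b) = 0` modulo `d`, then `x a = 0` and `y b = 0`. The phase is
condition (2), and testing injectivity at suitable `x`, `y` yields (1) and (3).

Conversely, the exponents only matter modulo `d / a` in the first column and modulo `d / b` in the
second, and `ZMod d` has stable range one, so (1) and (3) allow the columns to be lifted so that
their determinant `Δ` is a unit modulo `d`. Multiplication by `Δ`, applied only to representatives
of the classes modulo `a`, is a permutation of `ZMod d` whose matrix fixes `X^a` and, by (2), takes
`Z^b` to `Z^(Δb)`; dividing the second column by `Δ` leaves a determinant-one substitution of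
exponents. This is a unitary conjugation, because a pair of unitaries with the commutation relation
of `X` and `Z` is unitarily equivalent to `X` and `Z` up to phases.
-/

section StableRange

variable {R : Type*} [CommRing R]

theorem exists_isUnit_add_mul [IsArtinianRing R] {x y : R} (h : IsCoprime x y) :
    ∃ t, IsUnit (x + y * t) := by
  obtain ⟨n, z, hz⟩ := IsArtinian.exists_pow_succ_smul_dvd x (1 : R)
  simp only [smul_eq_mul, mul_one, Nat.succ_eq_add_one] at hz
  -- `t = 1 - x * z` lies in exactly those maximal ideals that do not contain `x`.
  refine ⟨1 - x * z, ?_⟩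
  by_contra hunit
  obtain ⟨M, hM, hmem⟩ := exists_max_ideal_of_mem_nonunits hunit
  have hprime := hM.isPrime
  by_cases hx : x ∈ M
  · have ht : 1 - x * z ∉ M := fun ht =>
      hprime.one_notMem <| (M.sub_mem_iff_left (M.mul_mem_right z hx)).1 ht
    have hy : y ∈ M := (hprime.mem_or_mem ((M.add_mem_iff_right hx).1 hmem)).resolve_right ht
    obtain ⟨α, β, hαβ⟩ := h
    exact hprime.one_notMem (hαβ ▸ M.add_mem (M.mul_mem_left α hx) (M.mul_mem_left β hy))
  · have hpow : x ^ n * (1 - x * z) = 0 := by linear_combination -hz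
    have ht : 1 - x * z ∈ M :=
      (hprime.mem_or_mem (hpow ▸ M.zero_mem)).resolve_left fun hxn =>
        hx (hprime.mem_of_pow_mem n hxn)
    exact hx ((M.add_mem_iff_left (M.mul_mem_left y ht)).1 hmem)

theorem exists_isCoprime_add_mul [IsArtinianRing R] {u v c α β γ : R}
    (h : α * u + β * v + γ * c = 1) : ∃ x, IsCoprime (u + c * x) v := by
  obtain ⟨t, w, hw⟩ := exists_isUnit_add_mul (x := u) (y := β * v + γ * c)
    ⟨α, 1, by linear_combination h⟩
  exact ⟨γ * t, (↑w⁻¹ : R), ↑w⁻¹ * β * t, by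
    linear_combination (-(↑w⁻¹ : R)) * hw + w.inv_mul⟩

theorem exists_isCoprime_det_add_mul [IsArtinianRing R] {u₁ v₁ u₂ v₂ A B α β γ δ ε ζ : R}
    (h₂ : α * u₂ + β * v₂ + γ * B = 1) (h₃ : δ * (u₁ * v₂ - u₂ * v₁) + ε * A + ζ * B = 1) :
    ∃ x y, IsCoprime ((u₁ + A * x) * v₂ - u₂ * (v₁ + A * y)) B := by
  obtain ⟨t, r, s, hrs⟩ := exists_isCoprime_add_mul (u := u₁ * v₂ - u₂ * v₁) (v := B) (c := A)
    (α := δ) (β := ζ) (γ := ε) (by linear_combination h₃)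
  -- Adding `A * t * (β, -α)` to the first column adds `A * t * (α * u₂ + β * v₂)` to the
  -- determinant, and this is `A * t` modulo `B`.
  exact ⟨β * t, -α * t, r, s + r * γ * A * t, by linear_combination hrs + r * A * t * h₂⟩

theorem exists_isUnit_det_add_mul [IsArtinianRing R]
    {u₁ v₁ u₂ v₂ A B α₁ β₁ γ₁ α₂ β₂ γ₂ δ ε ζ : R}
    (h₁ : α₁ * u₁ + β₁ * v₁ + γ₁ * A = 1) (h₂ : α₂ * u₂ + β₂ * v₂ + γ₂ * B = 1)
    (h₃ : δ * (u₁ * v₂ - u₂ * v₁) + ε * A + ζ * B = 1) :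
    ∃ x₁ y₁ x₂ y₂,
      IsUnit ((u₁ + A * x₁) * (v₂ + B * y₂) - (u₂ + B * x₂) * (v₁ + A * y₁)) := by
  obtain ⟨x, y, r, s, hdet⟩ := exists_isCoprime_det_add_mul h₂ h₃
  -- The first column is now unimodular modulo `A` and modulo `B`, hence modulo `A * B`.
  obtain ⟨γ, hγ⟩ : ∃ γ, α₁ * (u₁ + A * x) + β₁ * (v₁ + A * y) + γ * A = 1 :=
    ⟨γ₁ - α₁ * x - β₁ * y, by linear_combination h₁⟩
  obtain ⟨z, hcol⟩ : ∃ z, IsCoprime (u₁ + A * x + A * B * z) (v₁ + A * y) := by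
    apply exists_isCoprime_add_mul (α := α₁ + γ * A * r * v₂) (β := β₁ - γ * A * r * u₂)
      (γ := γ * s)
    linear_combination hγ + γ * A * hdet
  have hdet' : IsCoprime ((u₁ + A * x + A * B * z) * v₂ - u₂ * (v₁ + A * y)) B :=
    ⟨r, s - r * A * z * v₂, by linear_combination hdet⟩
  obtain ⟨t, ht⟩ := exists_isUnit_add_mul hdet'
  obtain ⟨m, n, hmn⟩ := hcol
  refine ⟨x + B * z, y, -(n * t), m * t, ?_⟩
  convert ht using 1
  linear_combination B * t * hmn

end StableRange

section Permutation

variable {R : Type*} [CommRing R]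

theorem exists_representative_mod (a : R) :
    ∃ r : R → R, (∀ n k, r (n + a * k) = r n) ∧ ∀ n, a ∣ n - r n := by
  let π := Ideal.Quotient.mk (Ideal.span {a})
  refine ⟨fun n => (π n).out, fun n k => congrArg Quotient.out ?_, fun n => ?_⟩
  · exact Ideal.Quotient.eq.2 (Ideal.mem_span_singleton.2 ⟨k, by ring⟩)
  · exact Ideal.mem_span_singleton.1 (Ideal.Quotient.eq.1 (Quotient.out_eq (π n)).symm)

theorem exists_perm_add_and_mul {a b : R} (v : Rˣ) (h : v * a * b = a * b) :
    ∃ τ : Equiv.Perm R, (∀ n, τ (n + a) = τ n + a) ∧ ∀ n, b * τ n = v * b * n := by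
  obtain ⟨r, hr_add, hr_dvd⟩ := exists_representative_mod a
  have hr (c n : R) : r (n + c * (n - r n)) = r n := by
    obtain ⟨k, hk⟩ := hr_dvd n
    rw [hk, mul_left_comm, hr_add]
  -- `τ` multiplies the chosen representative modulo `a` by `v`, so it commutes with translation by
  -- `a`; and `b * (v - 1)` kills multiples of `a`, so it only sees the representative.
  let τ : Equiv.Perm R :=
    { toFun n := n + (v - 1) * r n
      invFun m := m - (v - 1) * r (↑v⁻¹ * m)
      left_inv n := by
        have harg : ↑v⁻¹ * (n + (v - 1) * r n) = n + (↑v⁻¹ - 1) * (n - r n) := by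
          linear_combination r n * v.inv_mul
        simp only [harg, hr]
        ring
      right_inv m := by
        have harg : m - (v - 1) * r (↑v⁻¹ * m) =
            ↑v⁻¹ * m + (v - 1) * (↑v⁻¹ * m - r (↑v⁻¹ * m)) := by
          linear_combination -m * v.mul_inv
        simp only [harg, hr]
        linear_combination m * v.mul_inv }
  refine ⟨τ, fun n => ?_, fun n => ?_⟩
  · change n + a + (v - 1) * r (n + a) = n + (v - 1) * r n + a
    rw [← hr_add n 1, mul_one]
    ring
  · obtain ⟨k, hk⟩ := hr_dvd n
    change b * (n + (v - 1) * r n) = v * b * n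
    linear_combination (1 - v) * b * hk - k * h

end Permutation

namespace PhaseEq

variable {m n : Type*} {A B C D : Matrix n n ℂ}

theorem refl (A : Matrix n n ℂ) : PhaseEq A A :=
  ⟨1, norm_one, (one_smul ℂ A).symm⟩

theorem symm (h : PhaseEq A B) : PhaseEq B A := by
  obtain ⟨c, hc, rfl⟩ := h
  have hc0 : c ≠ 0 := norm_ne_zero_iff.1 (hc ▸ one_ne_zero)
  exact ⟨c⁻¹, by rw [norm_inv, hc, inv_one], (inv_smul_smul₀ hc0 B).symm⟩

theorem trans (hAB : PhaseEq A B) (hBC : PhaseEq B C) : PhaseEq A C := by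
  obtain ⟨c, hc, rfl⟩ := hAB
  obtain ⟨e, he, rfl⟩ := hBC
  exact ⟨c * e, by rw [norm_mul, hc, he, one_mul], (mul_smul c e C).symm⟩

theorem mul [Fintype n] (hAB : PhaseEq A B) (hCD : PhaseEq C D) :
    PhaseEq (A * C) (B * D) := by
  obtain ⟨c, hc, rfl⟩ := hAB
  obtain ⟨e, he, rfl⟩ := hCD
  exact ⟨c * e, by rw [norm_mul, hc, he, one_mul], smul_mul_smul_comm c B e D⟩

theorem pow [Fintype n] [DecidableEq n] (h : PhaseEq A B) (k : ℕ) :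
    PhaseEq (A ^ k) (B ^ k) := by
  obtain ⟨c, hc, rfl⟩ := h
  exact ⟨c ^ k, by rw [norm_pow, hc, one_pow], smul_pow c B k⟩

theorem map {F : Type*} [FunLike F (Matrix n n ℂ) (Matrix m m ℂ)]
    [LinearMapClass F ℂ (Matrix n n ℂ) (Matrix m m ℂ)] (φ : F) (h : PhaseEq A B) :
    PhaseEq (φ A) (φ B) := by
  obtain ⟨c, hc, rfl⟩ := h
  exact ⟨c, hc, map_smul φ c B⟩

theorem exists_smul_pow_eq_one [Fintype n] [DecidableEq n] {k : ℕ} (hk : k ≠ 0)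
    (h : PhaseEq (A ^ k) 1) : ∃ γ : ℂ, ‖γ‖ = 1 ∧ (γ • A) ^ k = 1 := by
  obtain ⟨c, hc, hA⟩ := h.symm
  obtain ⟨γ, rfl⟩ := IsAlgClosed.exists_pow_nat_eq c (Nat.pos_of_ne_zero hk)
  refine ⟨γ, (pow_eq_one_iff_of_nonneg (norm_nonneg γ) hk).1 (norm_pow γ k ▸ hc), ?_⟩
  rw [smul_pow, ← hA]

end PhaseEq

/-- Simultaneous unitary conjugacy up to phases: one unitary conjugates every `A i` to a unimodular
multiple of `B i`. A pair of matrices is encoded as a family `![A, B]`. -/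
def UCEquiv {ι n : Type*} [Fintype n] [DecidableEq n] (A B : ι → Matrix n n ℂ) : Prop :=
  ∃ W : Matrix.unitaryGroup n ℂ, ∀ i, PhaseEq (Unitary.conjStarAlgAut ℂ _ W (A i)) (B i)

namespace UCEquiv

variable {ι m n : Type*} [Fintype m] [DecidableEq m] [Fintype n] [DecidableEq n]
  {A B C : ι → Matrix n n ℂ}

theorem trans (hAB : UCEquiv A B) (hBC : UCEquiv B C) : UCEquiv A C := by
  obtain ⟨V, hV⟩ := hAB
  obtain ⟨W, hW⟩ := hBC
  refine ⟨W * V, fun i => ?_⟩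
  rw [map_mul]
  exact ((hV i).map (Unitary.conjStarAlgAut ℂ _ W)).trans (hW i)

theorem submatrix (h : UCEquiv A B) (e : m ≃ n) :
    UCEquiv (fun i => (A i).submatrix e e) fun i => (B i).submatrix e e := by
  obtain ⟨W, hW⟩ := h
  have hW' : (W : Matrix n n ℂ).submatrix e e ∈ Matrix.unitaryGroup m ℂ := by
    rw [Matrix.mem_unitaryGroup_iff, Matrix.star_eq_conjTranspose, Matrix.conjTranspose_submatrix,
      Matrix.submatrix_mul_equiv, ← Matrix.star_eq_conjTranspose,
      Matrix.mem_unitaryGroup_iff.1 W.2, Matrix.submatrix_one_equiv]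
  refine ⟨⟨_, hW'⟩, fun i => ?_⟩
  have h' := (hW i).map (Matrix.reindexAlgEquiv ℂ ℂ e.symm)
  simpa [Matrix.star_eq_conjTranspose, Matrix.submatrix_mul_equiv] using h'

theorem submatrix_iff (e : m ≃ n) :
    UCEquiv (fun i => (A i).submatrix e e) (fun i => (B i).submatrix e e) ↔ UCEquiv A B :=
  ⟨fun h => by simpa using h.submatrix e.symm, fun h => h.submatrix e⟩

end UCEquiv

section Weyl

variable {d : ℕ} [NeZero d]

/-- The Weyl operator `X^{p.1} Z^{p.2}` on `ℂ^d`, with the computational basis and the exponents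
both indexed by `ZMod d`; `ZMod.stdAddChar x` is `ω^x`. -/
noncomputable def weyl (p : ZMod d × ZMod d) : Matrix (ZMod d) (ZMod d) ℂ :=
  Matrix.of fun i j => if i = j + p.1 then ZMod.stdAddChar (p.2 * j) else 0

theorem weyl_apply (p : ZMod d × ZMod d) (i j : ZMod d) :
    weyl p i j = if i = j + p.1 then ZMod.stdAddChar (p.2 * j) else 0 :=
  rfl

@[simp]
theorem weyl_zero : weyl (0 : ZMod d × ZMod d) = 1 := by
  ext i j
  simp [weyl_apply, Matrix.one_apply]

theorem weyl_mul_weyl (p q : ZMod d × ZMod d) :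
    weyl p * weyl q = ZMod.stdAddChar (p.2 * q.1) • weyl (p + q) := by
  ext i j
  have hidx : i = j + q.1 + p.1 ↔ i = j + (p + q).1 := by rw [Prod.fst_add, add_assoc, add_comm p.1]
  simp only [Matrix.mul_apply, weyl_apply, Matrix.smul_apply, smul_eq_mul, mul_ite, mul_zero,
    Finset.sum_ite_eq', Finset.mem_univ, if_true, hidx, ite_mul, zero_mul]
  split_ifs
  · rw [← AddChar.map_add_eq_mul, ← AddChar.map_add_eq_mul, Prod.snd_add]
    ring_nf
  · rfl

theorem weyl_mul_weyl_comm (p q : ZMod d × ZMod d) :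
    weyl q * weyl p = ZMod.stdAddChar (p.1 * q.2 - q.1 * p.2) • (weyl p * weyl q) := by
  rw [weyl_mul_weyl, weyl_mul_weyl, smul_smul, ← AddChar.map_add_eq_mul, add_comm q p]
  ring_nf

theorem conjTranspose_weyl (p : ZMod d × ZMod d) :
    (weyl p)ᴴ = (ZMod.stdAddChar (p.1 * p.2) : ℂ) • weyl (-p) := by
  ext i j
  have hidx : j = i + p.1 ↔ i = j + (-p).1 := by rw [Prod.fst_neg, eq_add_neg_iff_add_eq, eq_comm]
  simp only [Matrix.conjTranspose_apply, weyl_apply, hidx, Matrix.smul_apply, smul_eq_mul, mul_ite,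
    mul_zero]
  split_ifs with h
  · rw [← AddChar.map_add_eq_mul, ← starRingEnd_apply, ← AddChar.map_neg_eq_conj, h, Prod.fst_neg,
      Prod.snd_neg]
    ring_nf
  · exact star_zero ℂ

theorem weyl_mem_unitaryGroup (p : ZMod d × ZMod d) : weyl p ∈ Matrix.unitaryGroup (ZMod d) ℂ := by
  rw [Matrix.mem_unitaryGroup_iff, Matrix.star_eq_conjTranspose, conjTranspose_weyl, mul_smul_comm,
    weyl_mul_weyl, smul_smul, ← AddChar.map_add_eq_mul, add_neg_cancel, weyl_zero, Prod.fst_neg,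
    mul_neg, mul_comm p.2, add_neg_cancel, AddChar.map_zero_eq_one, one_smul]

theorem phaseEq_weyl_mul_weyl (p q : ZMod d × ZMod d) :
    PhaseEq (weyl p * weyl q) (weyl (p + q)) :=
  ⟨_, AddChar.norm_apply _ _, weyl_mul_weyl p q⟩

theorem phaseEq_weyl_pow (p : ZMod d × ZMod d) (k : ℕ) :
    PhaseEq (weyl p ^ k) (weyl (k • p)) := by
  induction k with
  | zero => simpa using PhaseEq.refl (1 : Matrix (ZMod d) (ZMod d) ℂ)
  | succ k ih =>
    rw [pow_succ, succ_nsmul]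
    exact (ih.mul (PhaseEq.refl _)).trans (phaseEq_weyl_mul_weyl _ _)

theorem phaseEq_weyl_pow_val (p : ZMod d × ZMod d) (x : ZMod d) :
    PhaseEq (weyl p ^ x.val) (weyl (x • p)) := by
  have h := phaseEq_weyl_pow p x.val
  rwa [← Nat.cast_smul_eq_nsmul (ZMod d), ZMod.natCast_zmod_val] at h

theorem eq_zero_of_phaseEq_weyl_one {p : ZMod d × ZMod d} (h : PhaseEq (weyl p) 1) : p = 0 := by
  obtain ⟨c, hc, h⟩ := h
  have hc0 : c ≠ 0 := norm_ne_zero_iff.1 (hc ▸ one_ne_zero)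
  have hdiag (j : ZMod d) : weyl p j j = c := by rw [h]; simp
  have hfst : p.1 = 0 := by
    by_contra hp
    exact hc0 (by rw [← hdiag 0, weyl_apply, if_neg (by simpa [eq_comm] using hp)])
  have hval (j : ZMod d) : ZMod.stdAddChar (p.2 * j) = c := by
    rw [← hdiag j, weyl_apply, hfst, add_zero, if_pos rfl]
  have hsnd : p.2 * 1 = p.2 * 0 := ZMod.injective_stdAddChar ((hval 1).trans (hval 0).symm)
  exact Prod.ext hfst (by simpa using hsnd)

theorem phaseEq_weyl_pow_mul_weyl_pow (p q : ZMod d × ZMod d) (x y : ZMod d) :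
    PhaseEq (weyl p ^ x.val * weyl q ^ y.val) (weyl (x • p + y • q)) :=
  ((phaseEq_weyl_pow_val p x).mul (phaseEq_weyl_pow_val q y)).trans (phaseEq_weyl_mul_weyl _ _)

theorem phaseEq_map_weyl {F : Type*}
    [FunLike F (Matrix (ZMod d) (ZMod d) ℂ) (Matrix (ZMod d) (ZMod d) ℂ)]
    [AlgHomClass F ℂ (Matrix (ZMod d) (ZMod d) ℂ) (Matrix (ZMod d) (ZMod d) ℂ)] (φ : F)
    {p q p' q' : ZMod d × ZMod d} (hp : PhaseEq (φ (weyl p)) (weyl p'))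
    (hq : PhaseEq (φ (weyl q)) (weyl q')) (x y : ZMod d) :
    PhaseEq (φ (weyl (x • p + y • q))) (weyl (x • p' + y • q')) := by
  refine ((phaseEq_weyl_pow_mul_weyl_pow p q x y).symm.map φ).trans ?_
  rw [map_mul, map_pow, map_pow]
  exact ((hp.pow _).mul (hq.pow _)).trans (phaseEq_weyl_pow_mul_weyl_pow p' q' x y)

end Weyl

section Eigenvector

theorem mulVec_pow_mulVec_of_eigenvector {n R : Type*} [Fintype n] [DecidableEq n]
    [CommSemiring R] {P Q : Matrix n n R} {c μ : R} {f : n → R} (hPQ : Q * P = c • (P * Q))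
    (hf : Q *ᵥ f = μ • f) (k : ℕ) : Q *ᵥ (P ^ k *ᵥ f) = (c ^ k * μ) • (P ^ k *ᵥ f) := by
  have hcomm : Q * P ^ k = c ^ k • (P ^ k * Q) := by
    induction k with
    | zero => simp
    | succ k ih =>
      rw [pow_succ, ← mul_assoc, ih, smul_mul_assoc, mul_assoc, hPQ, mul_smul_comm, smul_smul,
        ← mul_assoc, ← pow_succ]
  rw [Matrix.mulVec_mulVec, hcomm, Matrix.smul_mulVec, ← Matrix.mulVec_mulVec, hf,
    Matrix.mulVec_smul, smul_smul]

theorem star_mulVec_dotProduct_mulVec {n R : Type*} [Fintype n] [DecidableEq n] [CommRing R]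
    [StarRing R] {Q : Matrix n n R} (hQ : Q ∈ Matrix.unitaryGroup n R) (f g : n → R) :
    star (Q *ᵥ f) ⬝ᵥ (Q *ᵥ g) = star f ⬝ᵥ g := by
  rw [Matrix.star_mulVec, Matrix.dotProduct_mulVec, Matrix.vecMul_vecMul,
    ← Matrix.star_eq_conjTranspose, Matrix.mem_unitaryGroup_iff'.1 hQ, Matrix.vecMul_one]

theorem exists_unit_eigenvector {n : Type*} [Fintype n] [Nonempty n] (Q : Matrix n n ℂ) :
    ∃ (f : n → ℂ) (μ : ℂ), star f ⬝ᵥ f = 1 ∧ Q *ᵥ f = μ • f := by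
  classical
  obtain ⟨μ, hμ⟩ := Module.End.exists_eigenvalue (Matrix.toLpLin 2 2 Q)
  obtain ⟨v, hv⟩ := hμ.exists_hasEigenvector
  have hQv : Q *ᵥ v.ofLp = μ • v.ofLp := by
    simpa only [Matrix.toLpLin_apply, WithLp.ofLp_smul] using
      congrArg WithLp.ofLp hv.apply_eq_smul
  let w : EuclideanSpace ℂ n := (‖v‖⁻¹ : ℂ) • v
  refine ⟨w.ofLp, μ, ?_, ?_⟩
  · have hw : ‖w‖ = 1 := norm_smul_inv_norm hv.2
    rw [dotProduct_comm, ← EuclideanSpace.inner_eq_star_dotProduct, inner_self_eq_norm_sq_to_K, hw]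
    simp
  · rw [WithLp.ofLp_smul, Matrix.mulVec_smul, hQv, smul_comm]

variable {n : Type*} [Fintype n] [DecidableEq n]

theorem norm_eigenvalue_eq_one {Q : Matrix n n ℂ} (hQ : Q ∈ Matrix.unitaryGroup n ℂ) {f : n → ℂ}
    {μ : ℂ} (hf : star f ⬝ᵥ f = 1) (hQf : Q *ᵥ f = μ • f) : ‖μ‖ = 1 := by
  have h := star_mulVec_dotProduct_mulVec hQ f f
  rw [hQf, star_smul, smul_dotProduct, dotProduct_smul, hf, smul_eq_mul, smul_eq_mul, mul_one] at h
  have hsq : ‖μ‖ ^ 2 = 1 := by rw [sq, ← CStarRing.norm_star_mul_self, h, norm_one]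
  exact (pow_eq_one_iff_of_nonneg (norm_nonneg μ) two_ne_zero).1 hsq

theorem star_dotProduct_eq_zero_of_eigenvalue_ne {Q : Matrix n n ℂ}
    (hQ : Q ∈ Matrix.unitaryGroup n ℂ) {f g : n → ℂ} {μ ν : ℂ} (hμ : ‖μ‖ = 1) (hμν : μ ≠ ν)
    (hf : Q *ᵥ f = μ • f) (hg : Q *ᵥ g = ν • g) : star f ⬝ᵥ g = 0 := by
  have hμ0 : μ ≠ 0 := norm_ne_zero_iff.1 (hμ ▸ one_ne_zero)
  have h := star_mulVec_dotProduct_mulVec hQ f g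
  rw [hf, hg, star_smul, smul_dotProduct, dotProduct_smul, smul_smul, smul_eq_mul,
    ← starRingEnd_apply, ← Complex.inv_eq_conj hμ] at h
  refine (mul_left_eq_self₀.1 h).resolve_left fun h1 => hμν ?_
  rwa [inv_mul_eq_one₀ hμ0] at h1

end Eigenvector

section WeylPair

variable {d : ℕ} [NeZero d] {P Q : Matrix (ZMod d) (ZMod d) ℂ} {f : ZMod d → ℂ} {μ : ℂ}

/-- The matrix with columns `f, P f, …, P^{d-1} f`. When `P` and `Q` satisfy the commutation
relation of `X` and `Z`, `P ^ d = 1`, and `f` is a unit eigenvector of `Q`, it is the unitary taking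
`X` to `P` and `Z` to a multiple of `Q`. -/
def krylovMatrix (P : Matrix (ZMod d) (ZMod d) ℂ) (f : ZMod d → ℂ) :
    Matrix (ZMod d) (ZMod d) ℂ :=
  Matrix.of fun i j => (P ^ j.val *ᵥ f) i

theorem col_krylovMatrix (P : Matrix (ZMod d) (ZMod d) ℂ) (f : ZMod d → ℂ) (j : ZMod d) :
    (krylovMatrix P f).col j = P ^ j.val *ᵥ f :=
  rfl

theorem col_mul_eq_mulVec {l m n R : Type*} [Fintype m] [NonUnitalNonAssocSemiring R]
    (A : Matrix l m R) (B : Matrix m n R) (j : n) : (A * B).col j = A *ᵥ B.col j :=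
  rfl

theorem col_mul_weyl {m : Type*} (A : Matrix m (ZMod d) ℂ) (p : ZMod d × ZMod d) (j : ZMod d) :
    (A * weyl p).col j = (ZMod.stdAddChar (p.2 * j) : ℂ) • A.col (j + p.1) := by
  ext i
  simp [Matrix.mul_apply, weyl_apply, mul_comm]

theorem krylovMatrix_mul_weyl_one_zero (hP : P ^ d = 1) (f : ZMod d → ℂ) :
    krylovMatrix P f * weyl (1, 0) = P * krylovMatrix P f := by
  have hpow (j : ZMod d) : P ^ (j + 1).val = P * P ^ j.val := by
    rw [add_comm, ZMod.val_add, ← pow_eq_pow_mod _ hP, pow_add, ZMod.val_one_eq_one_mod,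
      ← pow_eq_pow_mod _ hP, pow_one]
  refine Matrix.ext_col fun j => ?_
  rw [col_mul_weyl, col_mul_eq_mulVec, col_krylovMatrix, col_krylovMatrix, zero_mul,
    AddChar.map_zero_eq_one, one_smul, hpow, Matrix.mulVec_mulVec]

theorem mulVec_col_krylovMatrix (hPQ : Q * P = (ZMod.stdAddChar (1 : ZMod d) : ℂ) • (P * Q))
    (hf : Q *ᵥ f = μ • f) (j : ZMod d) :
    Q *ᵥ (krylovMatrix P f).col j =
      (ZMod.stdAddChar j * μ : ℂ) • (krylovMatrix P f).col j := by
  rw [col_krylovMatrix, mulVec_pow_mulVec_of_eigenvector hPQ hf, ← AddChar.map_nsmul_eq_pow,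
    nsmul_one, ZMod.natCast_zmod_val]

theorem mul_krylovMatrix (hPQ : Q * P = (ZMod.stdAddChar (1 : ZMod d) : ℂ) • (P * Q))
    (hf : Q *ᵥ f = μ • f) : Q * krylovMatrix P f = μ • (krylovMatrix P f * weyl (0, 1)) := by
  refine Matrix.ext_col fun j => ?_
  change _ = μ • (krylovMatrix P f * weyl (0, 1)).col j
  rw [col_mul_eq_mulVec, mulVec_col_krylovMatrix hPQ hf, col_mul_weyl, add_zero, one_mul, smul_smul,
    mul_comm]

theorem krylovMatrix_mem_unitaryGroup (hP : P ∈ Matrix.unitaryGroup (ZMod d) ℂ)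
    (hQ : Q ∈ Matrix.unitaryGroup (ZMod d) ℂ)
    (hPQ : Q * P = (ZMod.stdAddChar (1 : ZMod d) : ℂ) • (P * Q)) (hf : star f ⬝ᵥ f = 1)
    (hQf : Q *ᵥ f = μ • f) : krylovMatrix P f ∈ Matrix.unitaryGroup (ZMod d) ℂ := by
  have hμ : ‖μ‖ = 1 := norm_eigenvalue_eq_one hQ hf hQf
  have hμ0 : μ ≠ 0 := norm_ne_zero_iff.1 (hμ ▸ one_ne_zero)
  rw [Matrix.mem_unitaryGroup_iff']
  ext i j
  change star ((krylovMatrix P f).col i) ⬝ᵥ (krylovMatrix P f).col j = _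
  rw [Matrix.one_apply]
  split_ifs with hij
  · rw [hij, col_krylovMatrix, star_mulVec_dotProduct_mulVec (pow_mem hP j.val), hf]
  · refine star_dotProduct_eq_zero_of_eigenvalue_ne hQ ?_ ?_
      (mulVec_col_krylovMatrix hPQ hQf i) (mulVec_col_krylovMatrix hPQ hQf j)
    · rw [norm_mul, AddChar.norm_apply, hμ, one_mul]
    · exact fun h => hij (ZMod.injective_stdAddChar (mul_right_cancel₀ hμ0 h))

theorem exists_unitary_conj_weyl (hP : P ∈ Matrix.unitaryGroup (ZMod d) ℂ)
    (hQ : Q ∈ Matrix.unitaryGroup (ZMod d) ℂ)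
    (hPQ : Q * P = (ZMod.stdAddChar (1 : ZMod d) : ℂ) • (P * Q)) (hPd : PhaseEq (P ^ d) 1) :
    ∃ W : Matrix.unitaryGroup (ZMod d) ℂ,
      PhaseEq (Unitary.conjStarAlgAut ℂ _ W (weyl (1, 0))) P ∧
        PhaseEq (Unitary.conjStarAlgAut ℂ _ W (weyl (0, 1))) Q := by
  obtain ⟨γ, hγ, hγP⟩ := hPd.exists_smul_pow_eq_one (NeZero.ne d)
  have hP' : γ • P ∈ Matrix.unitaryGroup (ZMod d) ℂ := by
    refine Unitary.smul_mem_of_mem (Unitary.mem_iff_self_mul_star.2 ?_) hP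
    rw [← starRingEnd_apply, Complex.mul_conj', hγ, Complex.ofReal_one, one_pow]
  have hPQ' : Q * (γ • P) = (ZMod.stdAddChar (1 : ZMod d) : ℂ) • (γ • P * Q) := by
    rw [mul_smul_comm, hPQ, smul_comm, smul_mul_assoc]
  obtain ⟨f, μ, hf, hQf⟩ := exists_unit_eigenvector Q
  set W := krylovMatrix (γ • P) f
  have hW : W ∈ Matrix.unitaryGroup (ZMod d) ℂ :=
    krylovMatrix_mem_unitaryGroup hP' hQ hPQ' hf hQf
  have hWX : W * weyl (1, 0) * star W = γ • P := by
    rw [krylovMatrix_mul_weyl_one_zero hγP, mul_assoc, Matrix.mem_unitaryGroup_iff.1 hW, mul_one]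
  have hWZ : μ • (W * weyl (0, 1) * star W) = Q := by
    rw [← smul_mul_assoc, ← mul_krylovMatrix hPQ' hQf, mul_assoc, Matrix.mem_unitaryGroup_iff.1 hW,
      mul_one]
  exact ⟨⟨W, hW⟩, ⟨γ, hγ, hWX⟩, PhaseEq.symm ⟨μ, norm_eigenvalue_eq_one hQ hf hQf, hWZ.symm⟩⟩

end WeylPair

theorem permMatrix_mul_mul_star {n R : Type*} [Fintype n] [DecidableEq n] [NonAssocSemiring R]
    [StarRing R] (τ : Equiv.Perm n) (A : Matrix n n R) :
    τ.permMatrix R * A * star (τ.permMatrix R) = A.submatrix τ τ := by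
  rw [Matrix.star_eq_conjTranspose, Matrix.conjTranspose_permMatrix, PEquiv.toMatrix_toPEquiv_mul,
    PEquiv.mul_toMatrix_toPEquiv, Matrix.submatrix_submatrix]
  rfl

theorem permMatrix_mem_unitaryGroup {n R : Type*} [Fintype n] [DecidableEq n] [CommRing R]
    [StarRing R] (τ : Equiv.Perm n) : τ.permMatrix R ∈ Matrix.unitaryGroup n R := by
  rw [Matrix.mem_unitaryGroup_iff]
  simpa using permMatrix_mul_mul_star τ (1 : Matrix n n R)

section Clifford

variable {d : ℕ} [NeZero d]

theorem ucEquiv_weyl_of_det_eq_one {p q : ZMod d × ZMod d} (h : p.1 * q.2 - q.1 * p.2 = 1) :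
    UCEquiv (weyl (d := d)) fun v => weyl (v.1 • p + v.2 • q) := by
  have hpow : PhaseEq (weyl p ^ d) 1 := by
    have h := phaseEq_weyl_pow p d
    rwa [← Nat.cast_smul_eq_nsmul (ZMod d), ZMod.natCast_self, zero_smul, weyl_zero] at h
  obtain ⟨W, hX, hZ⟩ := exists_unitary_conj_weyl (weyl_mem_unitaryGroup p) (weyl_mem_unitaryGroup q)
    (h ▸ weyl_mul_weyl_comm p q) hpow
  refine ⟨W, fun v => ?_⟩
  simpa using phaseEq_map_weyl (Unitary.conjStarAlgAut ℂ _ W) hX hZ v.1 v.2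

theorem ucEquiv_weyl_mul_snd {a b : ZMod d} (v : (ZMod d)ˣ) (h : v * a * b = a * b) :
    UCEquiv ![weyl (a, 0), weyl (0, b)] ![weyl (a, 0), weyl (0, v * b)] := by
  obtain ⟨τ, hadd, hmul⟩ := exists_perm_add_and_mul v h
  let U : Matrix.unitaryGroup (ZMod d) ℂ := ⟨τ.permMatrix ℂ, permMatrix_mem_unitaryGroup τ⟩
  have hU (A : Matrix (ZMod d) (ZMod d) ℂ) :
      Unitary.conjStarAlgAut ℂ _ U A = A.submatrix τ τ :=
    permMatrix_mul_mul_star τ A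
  refine ⟨U, Fin.forall_fin_two.2 ⟨⟨1, norm_one, ?_⟩, ⟨1, norm_one, ?_⟩⟩⟩
  all_goals
    rw [hU, one_smul]
    ext i j
  · simp [weyl_apply, ← hadd]
  · simp [weyl_apply, hmul]

theorem ucEquiv_weyl_of_isUnit_det {a b : ZMod d} {p q : ZMod d × ZMod d}
    (hunit : IsUnit (p.1 * q.2 - q.1 * p.2)) (h : (p.1 * q.2 - q.1 * p.2) * a * b = a * b) :
    UCEquiv ![weyl (a, 0), weyl (0, b)] ![weyl (a • p), weyl (b • q)] := by
  obtain ⟨Δ, hΔ⟩ := hunit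
  rw [← hΔ] at h
  have hdet : p.1 * ((↑Δ⁻¹ : ZMod d) • q).2 - ((↑Δ⁻¹ : ZMod d) • q).1 * p.2 = 1 := by
    simp only [Prod.smul_fst, Prod.smul_snd, smul_eq_mul]
    linear_combination Δ.inv_mul - (↑Δ⁻¹ : ZMod d) * hΔ
  obtain ⟨W, hW⟩ := ucEquiv_weyl_of_det_eq_one hdet
  refine (ucEquiv_weyl_mul_snd Δ h).trans ⟨W, Fin.forall_fin_two.2 ⟨?_, ?_⟩⟩
  · simpa using hW (a, 0)
  · simpa [smul_smul, mul_comm, mul_assoc] using hW (0, Δ * b)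

theorem ucEquiv_weyl_of_unimodular {a b A B : ZMod d} {p q : ZMod d × ZMod d}
    {α₁ β₁ γ₁ α₂ β₂ γ₂ δ ε ζ : ZMod d} (hA : a * A = 0) (hB : b * B = 0)
    (h₁ : α₁ * p.1 + β₁ * p.2 + γ₁ * A = 1) (h₂ : α₂ * q.1 + β₂ * q.2 + γ₂ * B = 1)
    (h₃ : δ * (p.1 * q.2 - q.1 * p.2) + ε * A + ζ * B = 1)
    (h : (p.1 * q.2 - q.1 * p.2) * a * b = a * b) :
    UCEquiv ![weyl (a, 0), weyl (0, b)] ![weyl (a • p), weyl (b • q)] := by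
  obtain ⟨x₁, y₁, x₂, y₂, hunit⟩ := exists_isUnit_det_add_mul h₁ h₂ h₃
  have hp : a • (p.1 + A * x₁, p.2 + A * y₁) = a • p := by
    ext
    · change a * (p.1 + A * x₁) = a * p.1
      linear_combination x₁ * hA
    · change a * (p.2 + A * y₁) = a * p.2
      linear_combination y₁ * hA
  have hq : b • (q.1 + B * x₂, q.2 + B * y₂) = b • q := by
    ext
    · change b * (q.1 + B * x₂) = b * q.1
      linear_combination x₂ * hB
    · change b * (q.2 + B * y₂) = b * q.2
      linear_combination y₂ * hB
  rw [← hp, ← hq]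
  refine ucEquiv_weyl_of_isUnit_det hunit ?_
  linear_combination h + b * (x₁ * (q.2 + B * y₂) - (q.1 + B * x₂) * y₁) * hA +
    a * (p.1 * y₂ - x₂ * p.2) * hB

end Clifford

section Invariants

variable {d : ℕ} [NeZero d] {p q p' q' : ZMod d × ZMod d}

theorem det_eq_of_ucEquiv_weyl (h : UCEquiv ![weyl p, weyl q] ![weyl p', weyl q']) :
    p'.1 * q'.2 - q'.1 * p'.2 = p.1 * q.2 - q.1 * p.2 := by
  obtain ⟨W, hW⟩ := h
  obtain ⟨⟨c, hc, hp⟩, e, he, hq⟩ := Fin.forall_fin_two.1 hW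
  let φ := Unitary.conjStarAlgAut ℂ _ W
  replace hp : φ (weyl p) = c • weyl p' := hp
  replace hq : φ (weyl q) = e • weyl q' := hq
  have hcomm := congrArg φ (weyl_mul_weyl_comm p q)
  rw [map_smul, map_mul, map_mul, hp, hq, smul_mul_smul_comm, smul_mul_smul_comm,
    weyl_mul_weyl_comm p' q', mul_comm e c, smul_comm] at hcomm
  have hce : c * e ≠ 0 := norm_ne_zero_iff.1 (by rw [norm_mul, hc, he, one_mul]; exact one_ne_zero)
  have hne : (c * e) • (weyl p' * weyl q') ≠ 0 := by
    refine smul_ne_zero hce fun h0 => ?_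
    have hU := mul_mem (weyl_mem_unitaryGroup p') (weyl_mem_unitaryGroup q')
    rw [h0, Matrix.mem_unitaryGroup_iff, zero_mul] at hU
    exact zero_ne_one hU
  exact ZMod.injective_stdAddChar (smul_left_injective ℂ hne hcomm)

theorem smul_add_smul_eq_zero_of_ucEquiv_weyl
    (h : UCEquiv ![weyl p, weyl q] ![weyl p', weyl q']) {x y : ZMod d}
    (hxy : x • p' + y • q' = 0) : x • p + y • q = 0 := by
  obtain ⟨W, hW⟩ := h
  obtain ⟨hp, hq⟩ := Fin.forall_fin_two.1 hW
  have hφ := phaseEq_map_weyl (Unitary.conjStarAlgAut ℂ _ W) hp hq x y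
  rw [hxy, weyl_zero] at hφ
  apply eq_zero_of_phaseEq_weyl_one
  simpa only [StarAlgEquiv.symm_apply_apply, map_one] using
    hφ.map (Unitary.conjStarAlgAut ℂ _ W).symm

end Invariants

section Unimodular

theorem isUnit_of_dvd_of_forall_dvd {R : Type*} [CommRing R] [IsDomain R] {g u v C : R}
    (hC : C ≠ 0) (hgu : g ∣ u) (hgv : g ∣ v) (hgC : g ∣ C)
    (h : ∀ x, C ∣ x * u → C ∣ x * v → C ∣ x) : IsUnit g := by
  obtain ⟨k, rfl⟩ := hgC
  obtain ⟨m, hm⟩ :=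
    h k (mul_comm g k ▸ mul_dvd_mul_left k hgu) (mul_comm g k ▸ mul_dvd_mul_left k hgv)
  refine .of_mul_eq_one m (mul_left_cancel₀ (right_ne_zero_of_mul hC) ?_)
  linear_combination -hm

theorem isUnit_of_dvd_det_of_forall_dvd {R : Type*} [CommRing R] {g u₁ v₁ u₂ v₂ : R}
    (hg : g ∣ u₁ * v₂ - u₂ * v₁)
    (h : ∀ s t, g ∣ s * u₁ + t * u₂ → g ∣ s * v₁ + t * v₂ → g ∣ s ∧ g ∣ t) : IsUnit g := by
  have hv := h v₂ (-v₁) (by convert hg using 1; ring) ⟨0, by ring⟩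
  have hu := h (-u₂) u₁ ⟨0, by ring⟩ (by convert hg using 1; ring)
  refine isUnit_of_dvd_one (h 1 0 ?_ ?_).1
  · simpa using hu.2
  · simpa using hv.2

theorem exists_linear_combination_of_gcd_gcd_eq_one {x y z : ℤ}
    (h : Int.gcd x (Int.gcd y z) = 1) : ∃ α β γ : ℤ, α * x + β * y + γ * z = 1 := by
  have hx := Int.gcd_eq_gcd_ab x (y.gcd z)
  have hyz := Int.gcd_eq_gcd_ab y z
  rw [h, Nat.cast_one] at hx
  set r := x.gcdB (y.gcd z)
  exact ⟨x.gcdA (y.gcd z), r * y.gcdA z, r * y.gcdB z, by linear_combination -hx - r * hyz⟩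

end Unimodular

section ExponentLattice

theorem gcd_eq_one_of_forall_dvd {a C d u v : ℤ} (hd : d ≠ 0) (haC : a * C = d)
    (h : ∀ x : ℤ, d ∣ x * (u * a) → d ∣ x * (v * a) → d ∣ x * a) :
    Int.gcd u (Int.gcd v C) = 1 := by
  have ha0 : a ≠ 0 := left_ne_zero_of_mul (haC ▸ hd)
  have hdvd (n : ℤ) : d ∣ n * a ↔ C ∣ n := by rw [← haC, mul_comm n, mul_dvd_mul_iff_left ha0]
  rw [← Nat.isUnit_iff, ← Int.ofNat_isUnit]
  refine isUnit_of_dvd_of_forall_dvd (right_ne_zero_of_mul (haC ▸ hd)) (Int.gcd_dvd_left ..)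
    ((Int.gcd_dvd_right ..).trans (Int.gcd_dvd_left ..))
    ((Int.gcd_dvd_right ..).trans (Int.gcd_dvd_right ..)) fun x hxu hxv => ?_
  simpa only [← mul_assoc, hdvd, hxu, hxv, true_imp_iff] using h x

theorem gcd_det_eq_one_of_forall_dvd {a b A B d u₁ v₁ u₂ v₂ : ℤ} (hd : d ≠ 0)
    (haA : a * A = d) (hbB : b * B = d)
    (h : ∀ x y : ℤ, d ∣ x * (u₁ * a) + y * (u₂ * b) → d ∣ x * (v₁ * a) + y * (v₂ * b) →
      d ∣ x * a ∧ d ∣ y * b) :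
    Int.gcd (u₁ * v₂ - u₂ * v₁) (Int.gcd A B) = 1 := by
  set g := Int.gcd (u₁ * v₂ - u₂ * v₁) (Int.gcd A B)
  obtain ⟨C, hC⟩ : (g : ℤ) ∣ A := (Int.gcd_dvd_right ..).trans (Int.gcd_dvd_left ..)
  obtain ⟨E, hE⟩ : (g : ℤ) ∣ B := (Int.gcd_dvd_right ..).trans (Int.gcd_dvd_right ..)
  have hg0 : (g : ℤ) ≠ 0 := left_ne_zero_of_mul (right_ne_zero_of_mul (hC ▸ haA ▸ hd))
  have hm : C * a = E * b := by
    refine mul_left_cancel₀ hg0 ?_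
    linear_combination haA - hbB - a * hC + b * hE
  have hm0 : C * a ≠ 0 := fun h0 => hd (by rw [← haA, hC]; linear_combination g * h0)
  have hdvd (n : ℤ) : d ∣ n * (C * a) ↔ (g : ℤ) ∣ n := by
    rw [← haA, hC, mul_left_comm, mul_comm a C, mul_dvd_mul_iff_right hm0]
  rw [← Nat.isUnit_iff, ← Int.ofNat_isUnit]
  refine isUnit_of_dvd_det_of_forall_dvd (Int.gcd_dvd_left ..) fun s t hu hv => ?_
  have hst := h (s * C) (t * E) (by convert (hdvd _).2 hu using 1; linear_combination -t * u₂ * hm)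
    (by convert (hdvd _).2 hv using 1; linear_combination -t * v₂ * hm)
  rwa [mul_assoc, mul_assoc, ← hm, hdvd, hdvd] at hst

end ExponentLattice

section IntegerExponents

variable {d a b : ℕ} [NeZero d] {u₁ v₁ u₂ v₂ : ℤ}

theorem forall_dvd_of_ucEquiv_weyl
    (h : UCEquiv ![weyl ((a : ZMod d), 0), weyl (0, (b : ZMod d))]
      ![weyl ((a : ZMod d) • ((u₁ : ZMod d), (v₁ : ZMod d))),
        weyl ((b : ZMod d) • ((u₂ : ZMod d), (v₂ : ZMod d)))])
    (x y : ℤ) (hu : (d : ℤ) ∣ x * (u₁ * a) + y * (u₂ * b))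
    (hv : (d : ℤ) ∣ x * (v₁ * a) + y * (v₂ * b)) : (d : ℤ) ∣ x * a ∧ (d : ℤ) ∣ y * b := by
  rw [← ZMod.intCast_zmod_eq_zero_iff_dvd] at hu hv ⊢
  rw [← ZMod.intCast_zmod_eq_zero_iff_dvd]
  push_cast at hu hv ⊢
  have h0 := smul_add_smul_eq_zero_of_ucEquiv_weyl h (x := x) (y := y) <|
    Prod.ext (by simpa [mul_comm] using hu) (by simpa [mul_comm] using hv)
  simpa using Prod.ext_iff.1 h0

theorem det_modEq_of_ucEquiv_weyl
    (h : UCEquiv ![weyl ((a : ZMod d), 0), weyl (0, (b : ZMod d))]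
      ![weyl ((a : ZMod d) • ((u₁ : ZMod d), (v₁ : ZMod d))),
        weyl ((b : ZMod d) • ((u₂ : ZMod d), (v₂ : ZMod d)))]) :
    (u₁ * v₂ - u₂ * v₁) * a * b ≡ (a : ℤ) * b [ZMOD d] := by
  rw [← ZMod.intCast_eq_intCast_iff]
  push_cast
  have hdet := det_eq_of_ucEquiv_weyl h
  simp only [Prod.smul_mk, smul_eq_mul] at hdet
  linear_combination hdet

theorem ucEquiv_weyl_of_gcd_eq_one {A B : ℤ} (haA : a * A = d) (hbB : b * B = d)
    (h₁ : Int.gcd u₁ (Int.gcd v₁ A) = 1) (h₂ : Int.gcd u₂ (Int.gcd v₂ B) = 1)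
    (hdet : (u₁ * v₂ - u₂ * v₁) * a * b ≡ (a : ℤ) * b [ZMOD d])
    (h₃ : Int.gcd (u₁ * v₂ - u₂ * v₁) (Int.gcd A B) = 1) :
    UCEquiv ![weyl ((a : ZMod d), 0), weyl (0, (b : ZMod d))]
      ![weyl ((a : ZMod d) • ((u₁ : ZMod d), (v₁ : ZMod d))),
        weyl ((b : ZMod d) • ((u₂ : ZMod d), (v₂ : ZMod d)))] := by
  obtain ⟨α₁, β₁, γ₁, h₁⟩ := exists_linear_combination_of_gcd_gcd_eq_one h₁
  obtain ⟨α₂, β₂, γ₂, h₂⟩ := exists_linear_combination_of_gcd_gcd_eq_one h₂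
  obtain ⟨δ, ε, ζ, h₃⟩ := exists_linear_combination_of_gcd_gcd_eq_one h₃
  rw [← ZMod.intCast_eq_intCast_iff] at hdet
  push_cast at hdet
  refine ucEquiv_weyl_of_unimodular (A := A) (B := B) (α₁ := α₁) (β₁ := β₁) (γ₁ := γ₁) (α₂ := α₂)
    (β₂ := β₂) (γ₂ := γ₂) (δ := δ) (ε := ε) (ζ := ζ) ?_ ?_ ?_ ?_ ?_ hdet
  · simpa using congrArg (Int.cast : ℤ → ZMod d) haA
  · simpa using congrArg (Int.cast : ℤ → ZMod d) hbB
  · simpa using congrArg (Int.cast : ℤ → ZMod d) h₁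
  · simpa using congrArg (Int.cast : ℤ → ZMod d) h₂
  · simpa using congrArg (Int.cast : ℤ → ZMod d) h₃

end IntegerExponents

section Transport

open scoped Fin.CommRing in
theorem zmod_finEquiv_apply (d : ℕ) [NeZero d] (i : Fin d) :
    ZMod.finEquiv d i = ((i : ℕ) : ZMod d) := by
  rw [← map_natCast (ZMod.finEquiv d)]
  congr 1
  simp

variable (d : ℕ) [NeZero d]

theorem Xpow_eq_submatrix_weyl (s : ℤ) :
    Xpow d s = (weyl ((s : ZMod d), 0)).submatrix (ZMod.finEquiv d) (ZMod.finEquiv d) := by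
  ext i j
  have hij : (i : ℤ) = (((j : ℕ) : ℤ) + s) % d ↔ ((i : ℕ) : ZMod d) = (j : ℕ) + s := by
    have h := ZMod.intCast_eq_intCast_iff' (i : ℤ) (j + s) d
    rw [Int.emod_eq_of_lt (Int.natCast_nonneg _) (by exact_mod_cast i.isLt)] at h
    simpa using h.symm
  simp [Xpow, weyl_apply, hij, zmod_finEquiv_apply]

theorem Zpow_eq_submatrix_weyl (t : ℤ) :
    Zpow d t = (weyl (0, (t : ZMod d))).submatrix (ZMod.finEquiv d) (ZMod.finEquiv d) := by
  ext i j
  have hchar := ZMod.stdAddChar_coe (N := d) (t * (j : ℕ))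
  push_cast at hchar
  simp only [Zpow, Matrix.diagonal_apply, Matrix.submatrix_apply, weyl_apply, add_zero,
    EmbeddingLike.apply_eq_iff_eq]
  split_ifs with hij
  · rw [hij, zmod_finEquiv_apply, hchar, mul_assoc _ (t : ℂ)]
  · rfl

theorem GPM_eq_submatrix_weyl (s t : ℤ) :
    GPM d s t =
      (weyl ((s : ZMod d), (t : ZMod d))).submatrix (ZMod.finEquiv d) (ZMod.finEquiv d) := by
  rw [GPM, Xpow_eq_submatrix_weyl, Zpow_eq_submatrix_weyl]
  refine (Matrix.submatrix_mul_equiv _ _ _ (ZMod.finEquiv d).toEquiv _).trans ?_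
  rw [weyl_mul_weyl, zero_mul, AddChar.map_zero_eq_one, one_smul, Prod.mk_add_mk, zero_add,
    add_zero]

theorem exists_conj_iff_ucEquiv_weyl (a b : ℕ) (u₁ v₁ u₂ v₂ : ℤ) :
    (∃ W ∈ Matrix.unitaryGroup (Fin d) ℂ,
        PhaseEq (W * Xpow d a * Wᴴ) (GPM d (u₁ * a) (v₁ * a)) ∧
          PhaseEq (W * Zpow d b * Wᴴ) (GPM d (u₂ * b) (v₂ * b))) ↔
      UCEquiv ![weyl ((a : ZMod d), 0), weyl (0, (b : ZMod d))]
        ![weyl ((a : ZMod d) • ((u₁ : ZMod d), (v₁ : ZMod d))),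
          weyl ((b : ZMod d) • ((u₂ : ZMod d), (v₂ : ZMod d)))] := by
  rw [← UCEquiv.submatrix_iff (ZMod.finEquiv d).toEquiv, UCEquiv, Subtype.exists]
  refine exists_congr fun W => exists_prop.symm.trans (exists_congr fun hW => ?_)
  rw [Xpow_eq_submatrix_weyl, Zpow_eq_submatrix_weyl, GPM_eq_submatrix_weyl, GPM_eq_submatrix_weyl]
  refine Iff.trans ?_ (Fin.forall_fin_two).symm
  simp [mul_comm, Unitary.conjStarAlgAut_apply, Matrix.star_eq_conjTranspose]

end Transport

theorem uc_equiv_Xa_Zb_iff_general (d : ℕ) [NeZero d] (a b : ℕ) (ha : a ∣ d) (hb : b ∣ d)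
    (u₁ v₁ u₂ v₂ : ℤ) :
    (∃ W ∈ Matrix.unitaryGroup (Fin d) ℂ,
        PhaseEq (W * Xpow d (a : ℤ) * Wᴴ) (GPM d (u₁ * a) (v₁ * a)) ∧
        PhaseEq (W * Zpow d (b : ℤ) * Wᴴ) (GPM d (u₂ * b) (v₂ * b))) ↔
    (Int.gcd u₁ (Int.gcd v₁ ((d / a : ℕ) : ℤ) : ℤ) = 1 ∧
     Int.gcd u₂ (Int.gcd v₂ ((d / b : ℕ) : ℤ) : ℤ) = 1 ∧
     (u₁ * v₂ - u₂ * v₁) * a * b ≡ (a : ℤ) * b [ZMOD (d : ℤ)] ∧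
     Int.gcd (u₁ * v₂ - u₂ * v₁) (Int.gcd ((d / a : ℕ) : ℤ) ((d / b : ℕ) : ℤ) : ℤ) = 1) := by
  rw [exists_conj_iff_ucEquiv_weyl]
  have hd : (d : ℤ) ≠ 0 := by exact_mod_cast NeZero.ne d
  have haA : (a : ℤ) * (d / a : ℕ) = d := by exact_mod_cast Nat.mul_div_cancel' ha
  have hbB : (b : ℤ) * (d / b : ℕ) = d := by exact_mod_cast Nat.mul_div_cancel' hb
  constructor
  · intro h
    have hinj := forall_dvd_of_ucEquiv_weyl h
    exact ⟨gcd_eq_one_of_forall_dvd hd haA fun x hu hv => (hinj x 0 (by simpa) (by simpa)).1,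
      gcd_eq_one_of_forall_dvd hd hbB fun y hu hv => (hinj 0 y (by simpa) (by simpa)).2,
      det_modEq_of_ucEquiv_weyl h, gcd_det_eq_one_of_forall_dvd hd haA hbB hinj⟩
  · rintro ⟨h₁, h₂, hdet, h₃⟩
    exact ucEquiv_weyl_of_gcd_eq_one haA hbB h₁ h₂ hdet h₃

/-- **Theorem 3.1.** Let `a, b` be positive divisors of `d` (`a, b < d`) and
`0 ≤ u₁, v₁ < d/a`, `0 ≤ u₂, v₂ < d/b`. There exists a unitary `W` with
`W X^a W† ≈ X^{u₁a} Z^{v₁a}` and `W Z^b W† ≈ X^{u₂b} Z^{v₂b}` iff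
(1) `gcd(u₁, v₁, d/a) = 1 = gcd(u₂, v₂, d/b)`,
(2) `(u₁v₂ - u₂v₁)·a·b ≡ a·b (mod d)`, and
(3) `gcd(u₁v₂ - u₂v₁, d/a, d/b) = 1`. -/
theorem uc_equiv_Xa_Zb_iff (d : ℕ) (hd : 3 ≤ d) (a b : ℕ)
    (ha : a ∣ d) (hb : b ∣ d) (ha0 : 0 < a) (hb0 : 0 < b) (had : a < d) (hbd : b < d)
    (u₁ v₁ u₂ v₂ : ℤ)
    (hu₁0 : 0 ≤ u₁) (hu₁ : u₁ < ((d / a : ℕ) : ℤ)) (hv₁0 : 0 ≤ v₁) (hv₁ : v₁ < ((d / a : ℕ) : ℤ))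
    (hu₂0 : 0 ≤ u₂) (hu₂ : u₂ < ((d / b : ℕ) : ℤ)) (hv₂0 : 0 ≤ v₂) (hv₂ : v₂ < ((d / b : ℕ) : ℤ)) :
    (∃ W ∈ Matrix.unitaryGroup (Fin d) ℂ,
        PhaseEq (W * Xpow d (a : ℤ) * Wᴴ) (GPM d (u₁ * a) (v₁ * a)) ∧
        PhaseEq (W * Zpow d (b : ℤ) * Wᴴ) (GPM d (u₂ * b) (v₂ * b))) ↔
    (Int.gcd u₁ (Int.gcd v₁ ((d / a : ℕ) : ℤ) : ℤ) = 1 ∧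
     Int.gcd u₂ (Int.gcd v₂ ((d / b : ℕ) : ℤ) : ℤ) = 1 ∧
     (u₁ * v₂ - u₂ * v₁) * a * b ≡ (a : ℤ) * b [ZMOD (d : ℤ)] ∧
     Int.gcd (u₁ * v₂ - u₂ * v₁) (Int.gcd ((d / a : ℕ) : ℤ) ((d / b : ℕ) : ℤ) : ℤ) = 1) := by
  have : NeZero d := ⟨by omega⟩
  exact uc_equiv_Xa_Zb_iff_general d a b ha hb u₁ v₁ u₂ v₂
end
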